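/- arXiv:2510.07157 — 2 statements merged into one kernel-verified Lean document; each statement's English description precedes it below -/
import Mathlib

section
/- Let B be an |R|×|R| real matrix, K a |𝒦|×|R| real matrix, l ∈ ℝ^{|𝒦|}, x_u ∈ ℝ^{|R|} with x_u ≥ 0, and p_l ≤ p_u in ℝ^{|R|}. Let μ be a Borel probability measure on ℝ^{|R|} and ζ^{(1)}, ζ^{(2)}, … an i.i.d. sequence with common law μ on a probability space (Ω, P). Define x(p,ζ) = proj_{[0,x_u]}(B·p + ζ), c(p) = l − K·∫ x(p,ζ) dμ(ζ), and c_N(p) = l − K·( (1/N)Σ_{i=1}^N x(p, ζ^{(i)}) ). Then almost surely, sup_{p ∈ [p_l,p_u]} ‖ c_N(p) − c(p) ‖ → 0 as N → ∞. -/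
/-!
The maps `y ↦ boxProj xu (y + ζ i ω)` are independent copies of a random element of the Banach space
of bounded continuous functions with the supremum norm, so Etemadi's strong law of large numbers in
that space is already a uniform law. The space need not be separable, but the random element is
strongly measurable because it depends continuously on the noise: translating the uniformly
continuous function `boxProj xu` by nearby vectors gives uniformly close functions.
-/

open Matrix MeasureTheory ProbabilityTheory Filter

/-- Coordinatewise projection onto the box `[0, x_u]`. -/
noncomputable def boxProj {n : ℕ} (xu : Fin n → ℝ) (y : Fin n → ℝ) : Fin n → ℝ :=
  fun j => max 0 (min (y j) (xu j))

section UniformStrongLaw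

open scoped BoundedContinuousFunction Topology

variable {Ω Z X E : Type*} [MeasurableSpace Ω] {P : Measure Ω}
  [MeasurableSpace Z] {μ : Measure Z} {ζ : ℕ → Ω → Z}
  [NormedAddCommGroup E] [NormedSpace ℝ E] [CompleteSpace E]

theorem strong_law_ae_comp {F : Z → E} (hint : Integrable F μ)
    (hindep : Pairwise fun i j => ζ i ⟂ᵢ[P] ζ j) (hlaw : ∀ i, HasLaw (ζ i) μ P) :
    ∀ᵐ ω ∂P, Tendsto (fun N : ℕ => (N : ℝ)⁻¹ • ∑ i ∈ Finset.range N, F (ζ i ω)) atTop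
      (𝓝 (∫ z, F z ∂μ)) := by
  borelize E
  have hF : ∀ i, AEMeasurable F (P.map (ζ i)) := fun i => by
    rw [(hlaw i).map_eq]; exact hint.aemeasurable
  have hident : ∀ i, IdentDistrib (F ∘ ζ i) (F ∘ ζ 0) P P := fun i =>
    ((hlaw i).identDistrib (hlaw 0)).comp_of_aemeasurable (hF i)
  have hint₀ : Integrable (F ∘ ζ 0) P :=
    .comp_aemeasurable (by rwa [(hlaw 0).map_eq]) (hlaw 0).aemeasurable
  rw [← (hlaw 0).integral_comp hint.aestronglyMeasurable]
  exact strong_law_ae (fun i => F ∘ ζ i) hint₀ (fun i j hij => (hindep hij).comp₀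
    (hlaw i).aemeasurable (hlaw j).aemeasurable (hF i) (hF j)) hident

theorem ae_tendstoUniformly_average_of_boundedContinuousFunction [TopologicalSpace X]
    {F : Z → X →ᵇ E} (hint : Integrable F μ)
    (hindep : Pairwise fun i j => ζ i ⟂ᵢ[P] ζ j) (hlaw : ∀ i, HasLaw (ζ i) μ P) :
    ∀ᵐ ω ∂P, TendstoUniformly
      (fun (N : ℕ) x => (N : ℝ)⁻¹ • ∑ i ∈ Finset.range N, F (ζ i ω) x)
      (fun x => ∫ z, F z x ∂μ) atTop := by
  have integral_apply : ⇑(∫ z, F z ∂μ) = fun x => ∫ z, F z x ∂μ := funext fun x =>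
    ((BoundedContinuousFunction.evalCLM ℝ x).integral_comp_comm hint).symm
  filter_upwards [strong_law_ae_comp hint hindep hlaw] with ω hω
  rw [BoundedContinuousFunction.tendsto_iff_tendstoUniformly, integral_apply] at hω
  simpa only [BoundedContinuousFunction.coe_smul, BoundedContinuousFunction.sum_apply] using hω

theorem ae_tendstoUniformly_average_of_uniformContinuous₂ [IsFiniteMeasure μ]
    [UniformSpace Z] [SecondCountableTopology Z] [OpensMeasurableSpace Z] [UniformSpace X]
    {f : Z → X → E} (hf : UniformContinuous₂ f)
    (hbdd : Bornology.IsBounded (Set.range (Function.uncurry f)))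
    (hindep : Pairwise fun i j => ζ i ⟂ᵢ[P] ζ j) (hlaw : ∀ i, HasLaw (ζ i) μ P) :
    ∀ᵐ ω ∂P, TendstoUniformly
      (fun (N : ℕ) x => (N : ℝ)⁻¹ • ∑ i ∈ Finset.range N, f (ζ i ω) x)
      (fun x => ∫ z, f z x ∂μ) atTop := by
  obtain ⟨C, hC, hfC⟩ := hbdd.exists_pos_norm_le
  have norm_le : ∀ z x, ‖f z x‖ ≤ C := fun z x => hfC _ ⟨(z, x), rfl⟩
  let F : Z → X →ᵇ E := fun z =>
    .ofNormedAddCommGroup (f z) (hf.uniformContinuous.continuous.uncurry_left z) C (norm_le z)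
  have hF : Continuous F := continuous_iff_continuousAt.2 fun z₀ =>
    BoundedContinuousFunction.tendsto_iff_tendstoUniformly.2 (hf.tendstoUniformly (x := z₀))
  have hint : Integrable F μ := .of_bound hF.aestronglyMeasurable C <|
    .of_forall fun z => BoundedContinuousFunction.norm_ofNormedAddCommGroup_le _ hC.le (norm_le z)
  exact ae_tendstoUniformly_average_of_boundedContinuousFunction hint hindep hlaw

end UniformStrongLaw

lemma uniformContinuous_mulVec {ι κ : Type*} [Fintype ι] (K : Matrix κ ι ℝ) :
    UniformContinuous K.mulVec :=
  (LinearMap.toContinuousLinearMap K.mulVecLin).uniformContinuous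

section BoxProjection

variable {n : ℕ} {xu : Fin n → ℝ}

lemma boxProj_mem_Icc (hxu : 0 ≤ xu) (y : Fin n → ℝ) : boxProj xu y ∈ Set.Icc 0 xu :=
  ⟨fun _ => le_max_left _ _, fun j => max_le (hxu j) (min_le_right _ _)⟩

lemma uniformContinuous_boxProj (xu : Fin n → ℝ) : UniformContinuous (boxProj xu) :=
  uniformContinuous_pi.2 fun j =>
    (((LipschitzWith.eval j).min_const (xu j)).const_max 0).uniformContinuous

end BoxProjection

theorem cN_uniform_consistency_general {n : ℕ} {ι κ : Type*} [Fintype ι]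
    (B : Matrix (Fin n) ι ℝ) (K : Matrix κ (Fin n) ℝ) (l : κ → ℝ)
    (xu : Fin n → ℝ) (hxu : 0 ≤ xu)
    (μ : Measure (Fin n → ℝ)) [IsProbabilityMeasure μ]
    {Ω : Type*} [MeasurableSpace Ω] (P : Measure Ω) (ζ : ℕ → Ω → Fin n → ℝ)
    (hindep : Pairwise fun i j => ζ i ⟂ᵢ[P] ζ j) (hlaw : ∀ i, HasLaw (ζ i) μ P) :
    ∀ᵐ ω ∂P, TendstoUniformly
      (fun (N : ℕ) (p : ι → ℝ) =>
        l - K.mulVec ((1 / N : ℝ) • ∑ i ∈ Finset.range N, boxProj xu (B.mulVec p + ζ i ω)))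
      (fun p : ι → ℝ => l - K.mulVec (∫ z, boxProj xu (B.mulVec p + z) ∂μ)) atTop := by
  have translates_uniformContinuous : UniformContinuous₂ fun z y => boxProj xu (y + z) :=
    (uniformContinuous_boxProj xu).comp (uniformContinuous_snd.add uniformContinuous_fst)
  have translates_bounded :
      Bornology.IsBounded (Set.range (Function.uncurry fun z y => boxProj xu (y + z))) :=
    (Metric.isBounded_Icc 0 xu).subset (Set.range_subset_iff.2 fun _ => boxProj_mem_Icc hxu _)
  have constraint_uniformContinuous : UniformContinuous fun v => l - K.mulVec v :=
    uniformContinuous_const.sub (uniformContinuous_mulVec K)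
  filter_upwards [ae_tendstoUniformly_average_of_uniformContinuous₂ translates_uniformContinuous
    translates_bounded hindep hlaw] with ω average_tendsto
  simpa only [one_div, Function.comp_def] using
    constraint_uniformContinuous.comp_tendstoUniformly (average_tendsto.comp B.mulVec)

/-- (Uniform consistency of the Monte Carlo constraint.)
For i.i.d. scenarios `ζ⁽¹⁾, ζ⁽²⁾, …` with common law `μ`, almost surely
`sup_{p ∈ [p_l,p_u]} ‖c_N(p) - c(p)‖ → 0` as `N → ∞`, i.e. the sample-average constraint
maps `c_N(p) = l - K((1/N) Σᵢ x(p,ζ⁽ⁱ⁾))` converge uniformly on the box `[p_l, p_u]`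
to the expected constraint `c(p) = l - K ∫ x(p,ζ) dμ(ζ)`, where
`x(p,ζ) = proj_{[0,x_u]}(B p + ζ)`. -/
theorem cN_uniform_consistency {n k : ℕ}
    (B : Matrix (Fin n) (Fin n) ℝ)
    (K : Matrix (Fin k) (Fin n) ℝ) (l : Fin k → ℝ)
    (xu : Fin n → ℝ) (hxu : ∀ j, 0 ≤ xu j)
    (pl pu : Fin n → ℝ) (hplu : pl ≤ pu)
    (μ : Measure (Fin n → ℝ)) [IsProbabilityMeasure μ]
    {Ω : Type*} [MeasurableSpace Ω] (P : Measure Ω) [IsProbabilityMeasure P]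
    (ζ : ℕ → Ω → (Fin n → ℝ))
    (hmeas : ∀ i, Measurable (ζ i))
    (hindep : iIndepFun ζ P)
    (hident : ∀ i, P.map (ζ i) = μ) :
    ∀ᵐ ω ∂P, TendstoUniformlyOn
      (fun (N : ℕ) (p : Fin n → ℝ) =>
        l - K.mulVec ((1 / N : ℝ) • ∑ i ∈ Finset.range N, boxProj xu (B.mulVec p + ζ i ω)))
      (fun p : Fin n → ℝ =>
        l - K.mulVec (∫ z, boxProj xu (B.mulVec p + z) ∂μ))
      atTop (Set.Icc pl pu) := by
  filter_upwards [cN_uniform_consistency_general B K l xu hxu μ P ζ (fun _ _ => hindep.indepFun)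
    fun i => ⟨(hmeas i).aemeasurable, hident i⟩] with ω hω using hω.tendstoUniformlyOn
end

section
/- Let B, Q be |R|×|R| real matrices with Q symmetric, s ∈ ℝ^{|R|}, λ ∈ ℝ, x_u ∈ ℝ^{|R|} with x_u > 0 coordinatewise, and ζ^{(1)}, …, ζ^{(N)} ∈ ℝ^{|R|}. Define f_N as the Monte Carlo objective f_N(p) = (λ/2)‖p‖₂² + (1/N)Σ_{i=1}^N [ (1/2)⟨Q·x^{(i)}(p), x^{(i)}(p)⟩ − ⟨s, x^{(i)}(p)⟩ ] with x^{(i)}(p) = proj_{[0,x_u]}(B·p + ζ^{(i)}). Suppose p* is nondegenerate: for all i, j, (B·p* + ζ^{(i)})_j ∉ {0, (x_u)_j}. Then f_N is twice Fréchet differentiable at p* with Hessian ∇²f_N(p*) = λ·I + (1/N)·Bᵀ·( Σ_{i=1}^N Diag(ω^{(i)})·Q·Diag(ω^{(i)}) )·B, where ω^{(i)} ∈ {0,1}^{|R|} has ω^{(i)}_j = 1 iff 0 < (B·p* + ζ^{(i)})_j < (x_u)_j. -/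
open Matrix

/-!
The box projection is affine near every point none of whose coordinates lies on the boundary of
the box, with linear part `Diag(ω)`, where `ω` marks the coordinates strictly inside. Each scenario
cost is therefore, near `p*`, the quadratic `x ↦ (1/2)⟨Qx, x⟩ - ⟨s, x⟩` composed with an affine map
of linear part `Diag(ω⁽ⁱ⁾) B`, and a Hessian `Q` pulls back along an affine map of linear part `A`
to `Aᵀ Q A`.
-/

open Filter Topology

/-- `f` is twice Fréchet differentiable at `x` with second derivative `f''`. Differentiability near
`x` is part of the notion because `fderiv` takes the junk value `0` where `f` is not
differentiable. -/
def HasSecondFDerivAt {𝕜 E F : Type*} [NontriviallyNormedField 𝕜] [NormedAddCommGroup E]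
    [NormedSpace 𝕜 E] [NormedAddCommGroup F] [NormedSpace 𝕜 F]
    (f : E → F) (f'' : E →L[𝕜] E →L[𝕜] F) (x : E) : Prop :=
  (∀ᶠ y in 𝓝 x, DifferentiableAt 𝕜 f y) ∧ HasFDerivAt (fderiv 𝕜 f) f'' x

namespace HasSecondFDerivAt

variable {𝕜 E F G : Type*} [NontriviallyNormedField 𝕜]
  [NormedAddCommGroup E] [NormedSpace 𝕜 E] [NormedAddCommGroup F] [NormedSpace 𝕜 F]
  [NormedAddCommGroup G] [NormedSpace 𝕜 G]
  {f g : E → F} {f'' g'' : E →L[𝕜] E →L[𝕜] F} {x : E}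

theorem of_eventually_hasFDerivAt {f' : E → E →L[𝕜] F}
    (hf : ∀ᶠ y in 𝓝 x, HasFDerivAt f (f' y) y) (hf' : HasFDerivAt f' f'' x) :
    HasSecondFDerivAt f f'' x :=
  ⟨hf.mono fun _ hy => hy.differentiableAt,
    hf'.congr_of_eventuallyEq (hf.mono fun _ hy => hy.fderiv)⟩

theorem eventually_hasFDerivAt (hf : HasSecondFDerivAt f f'' x) :
    ∀ᶠ y in 𝓝 x, HasFDerivAt f (fderiv 𝕜 f y) y :=
  hf.1.mono fun _ hy => hy.hasFDerivAt

theorem bilinear_self (M : E →L[𝕜] E →L[𝕜] F) (x : E) :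
    HasSecondFDerivAt (fun y => M y y) (M + M.flip) x := by
  refine of_eventually_hasFDerivAt (.of_forall fun y => ?_) (M + M.flip).hasFDerivAt
  refine (M.hasFDerivAt_of_bilinear (hasFDerivAt_id y) (hasFDerivAt_id y)).congr_fderiv ?_
  ext v
  simp

theorem add (hf : HasSecondFDerivAt f f'' x) (hg : HasSecondFDerivAt g g'' x) :
    HasSecondFDerivAt (fun y => f y + g y) (f'' + g'') x := by
  refine of_eventually_hasFDerivAt ?_ (hf.2.fun_add hg.2)
  filter_upwards [hf.eventually_hasFDerivAt, hg.eventually_hasFDerivAt] with y hfy hgy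
  exact hfy.fun_add hgy

theorem sub_continuousLinearMap (hf : HasSecondFDerivAt f f'' x) (L : E →L[𝕜] F) :
    HasSecondFDerivAt (fun y => f y - L y) f'' x :=
  of_eventually_hasFDerivAt (hf.eventually_hasFDerivAt.mono fun _ hy => hy.fun_sub L.hasFDerivAt)
    (hf.2.sub_const L)

theorem const_smul (c : 𝕜) (hf : HasSecondFDerivAt f f'' x) :
    HasSecondFDerivAt (fun y => c • f y) (c • f'') x :=
  of_eventually_hasFDerivAt (hf.eventually_hasFDerivAt.mono fun _ hy => hy.fun_const_smul c)
    (hf.2.fun_const_smul c)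

theorem sum {κ : Type*} {u : Finset κ} {f : κ → E → F} {f'' : κ → E →L[𝕜] E →L[𝕜] F}
    (hf : ∀ i ∈ u, HasSecondFDerivAt (f i) (f'' i) x) :
    HasSecondFDerivAt (fun y => ∑ i ∈ u, f i y) (∑ i ∈ u, f'' i) x := by
  refine of_eventually_hasFDerivAt ?_ (.fun_sum fun i hi => (hf i hi).2)
  have hdiff : ∀ᶠ y in 𝓝 x, ∀ i ∈ u, HasFDerivAt (f i) (fderiv 𝕜 (f i) y) y :=
    (eventually_all_finset u).2 fun i hi => (hf i hi).eventually_hasFDerivAt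
  exact hdiff.mono fun _ hy => .fun_sum hy

theorem comp_of_eventually_affine {f : F → G} {f'' : F →L[𝕜] F →L[𝕜] G} {g : E → F}
    {A : E →L[𝕜] F} (hf : HasSecondFDerivAt f f'' (g x))
    (hg : ∀ᶠ y in 𝓝 x, g y = g x + A (y - x)) :
    HasSecondFDerivAt (fun y => f (g y)) (f''.bilinearComp A A) x := by
  have hg' : ∀ᶠ y in 𝓝 x, HasFDerivAt g A y := by
    refine hg.eventually_nhds.mono fun y hy => ?_
    have hsub : HasFDerivAt (fun z => z - x) (ContinuousLinearMap.id 𝕜 E) y :=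
      (hasFDerivAt_id y).sub_const x
    exact ((A.hasFDerivAt.comp y hsub).const_add (g x)).congr_of_eventuallyEq hy
  have hgx : HasFDerivAt g A x := hg'.self_of_nhds
  refine of_eventually_hasFDerivAt (f' := fun y => (fderiv 𝕜 f (g y)).comp A) ?_ ?_
  · filter_upwards [hg', hgx.continuousAt.eventually hf.eventually_hasFDerivAt] with y hgy hfy
    exact hfy.comp y hgy
  · refine ((hf.2.comp x hgx).clm_comp (hasFDerivAt_const A x)).congr_fderiv ?_
    ext v w
    simp

end HasSecondFDerivAt

section QuadraticCost

variable {m n : Type*} [Fintype m] [Fintype n]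

/-- The continuous bilinear form `(v, w) ↦ ⟨A v, w⟩` of a real square matrix, through which a
Hessian matrix is read as a second derivative; linear in `A`, so that sums and multiples of Hessian
matrices carry over. -/
noncomputable def hessianForm : Matrix n n ℝ →ₗ[ℝ] (n → ℝ) →L[ℝ] (n → ℝ) →L[ℝ] ℝ where
  toFun A := (dotProductBilin ℝ ℝ ∘ₗ A.mulVecLin).toContinuousBilinearMap
  map_add' A B := by ext; simp
  map_smul' c A := by ext; simp

@[simp]
theorem hessianForm_apply (A : Matrix n n ℝ) (v w : n → ℝ) :
    hessianForm A v w = A *ᵥ v ⬝ᵥ w :=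
  rfl

theorem flip_hessianForm (A : Matrix n n ℝ) : (hessianForm A).flip = hessianForm Aᵀ := by
  ext v w
  simpa [mulVec_transpose, ← dotProduct_mulVec] using dotProduct_comm _ _

theorem hessianForm_bilinearComp (H : Matrix m m ℝ) (A : Matrix m n ℝ) :
    (hessianForm H).bilinearComp A.mulVecLin.toContinuousLinearMap
      A.mulVecLin.toContinuousLinearMap = hessianForm (Aᵀ * H * A) := by
  ext v w
  simp [Matrix.mul_assoc, ← mulVec_mulVec, mulVec_transpose, ← dotProduct_mulVec]

theorem HasSecondFDerivAt.comp_of_eventually_mulVec {f : (m → ℝ) → ℝ} {H : Matrix m m ℝ}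
    {g : (n → ℝ) → m → ℝ} {A : Matrix m n ℝ} {x : n → ℝ}
    (hf : HasSecondFDerivAt f (hessianForm H) (g x))
    (hg : ∀ᶠ y in 𝓝 x, g y = g x + A *ᵥ (y - x)) :
    HasSecondFDerivAt (fun y => f (g y)) (hessianForm (Aᵀ * H * A)) x :=
  hessianForm_bilinearComp H A ▸ hf.comp_of_eventually_affine hg

/-- The congestion-plus-pricing cost `(1/2)⟨Qx, x⟩ - ⟨s, x⟩` of a flow `x`. -/
noncomputable def quadCost (Q : Matrix n n ℝ) (s x : n → ℝ) : ℝ :=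
  (1 / 2 : ℝ) * (Q *ᵥ x ⬝ᵥ x) - s ⬝ᵥ x

theorem quadCost_one_zero [DecidableEq n] (x : n → ℝ) :
    quadCost 1 0 x = 1 / 2 * ∑ j, x j ^ 2 := by
  simp [quadCost, dotProduct, sq]

theorem hasSecondFDerivAt_quadCost {Q : Matrix n n ℝ} (hQ : Q.IsSymm) (s x : n → ℝ) :
    HasSecondFDerivAt (quadCost Q s) (hessianForm Q) x := by
  have hsymm : (1 / 2 : ℝ) • (hessianForm Q + (hessianForm Q).flip) = hessianForm Q := by
    rw [flip_hessianForm, hQ.eq, ← two_smul ℝ (hessianForm Q), smul_smul]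
    norm_num
  have hquad := (HasSecondFDerivAt.bilinear_self (hessianForm Q) x).const_smul (1 / 2 : ℝ)
  rw [hsymm] at hquad
  exact hquad.sub_continuousLinearMap (dotProductBilin ℝ ℝ s).toContinuousLinearMap

end QuadraticCost

section BoxProjection

theorem eventually_max_zero_min_eq {R : Type*} [Ring R] [LinearOrder R] [TopologicalSpace R]
    [OrderClosedTopology R] {u y : R} (hy₀ : y ≠ 0) (hyu : y ≠ u) :
    ∀ᶠ z in 𝓝 y,
      max 0 (min z u) = max 0 (min y u) + (if 0 < y ∧ y < u then 1 else 0) * (z - y) := by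
  rcases hy₀.lt_or_gt with hneg | hpos
  · filter_upwards [Iio_mem_nhds hneg] with z (hz : z < 0)
    simp [hneg.not_gt, min_le_of_left_le hneg.le, min_le_of_left_le hz.le]
  rcases hyu.lt_or_gt with hlt | hgt
  · filter_upwards [Ioo_mem_nhds hpos hlt] with z hz
    simp [hpos, hlt, hpos.le, hlt.le, hz.1.le, hz.2.le]
  · filter_upwards [Ioi_mem_nhds hgt] with z (hz : u < z)
    simp [hgt.not_gt, hgt.le, hz.le]

variable {n : ℕ} {xu y : Fin n → ℝ}

/-- The 0–1 activity vector `ω` of the box `[0, x_u]` at `y`, marking the coordinates of `y`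
strictly inside the box. -/
noncomputable def boxActivity (xu y : Fin n → ℝ) : Fin n → ℝ :=
  fun j => if 0 < y j ∧ y j < xu j then 1 else 0

theorem boxProj_eventually_affine (hy : ∀ j, y j ≠ 0 ∧ y j ≠ xu j) :
    ∀ᶠ z in 𝓝 y, boxProj xu z = boxProj xu y + diagonal (boxActivity xu y) *ᵥ (z - y) := by
  have hcoord : ∀ᶠ z in 𝓝 y, ∀ j,
      boxProj xu z j = boxProj xu y j + boxActivity xu y j * (z j - y j) :=
    eventually_all.2 fun j =>
      (continuous_apply j).continuousAt.eventually (eventually_max_zero_min_eq (hy j).1 (hy j).2)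
  filter_upwards [hcoord] with z hz
  ext j
  simp [hz, mulVec_diagonal]

theorem hasSecondFDerivAt_quadCost_boxProj {ι : Type*} [Fintype ι] (B : Matrix (Fin n) ι ℝ)
    {Q : Matrix (Fin n) (Fin n) ℝ} (hQ : Q.IsSymm) (s z : Fin n → ℝ) {p : ι → ℝ}
    (hp : ∀ j, (B *ᵥ p + z) j ≠ 0 ∧ (B *ᵥ p + z) j ≠ xu j) :
    HasSecondFDerivAt (fun q => quadCost Q s (boxProj xu (B *ᵥ q + z)))
      (hessianForm (Bᵀ * (diagonal (boxActivity xu (B *ᵥ p + z)) * Q *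
        diagonal (boxActivity xu (B *ᵥ p + z))) * B)) p := by
  have hproj := (hasSecondFDerivAt_quadCost hQ s _).comp_of_eventually_mulVec
    (boxProj_eventually_affine hp)
  rw [diagonal_transpose] at hproj
  refine hproj.comp_of_eventually_mulVec (g := fun q => B *ᵥ q + z) (.of_forall fun q => ?_)
  simp only [mulVec_sub]
  abel

end BoxProjection

theorem fN_hessian_at_nondegenerate_general {ι κ : Type*} [Fintype ι] [DecidableEq ι] [Fintype κ]
    {n : ℕ} (B : Matrix (Fin n) ι ℝ) {Q : Matrix (Fin n) (Fin n) ℝ} (hQ : Q.IsSymm)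
    (s : Fin n → ℝ) (lam : ℝ) {xu : Fin n → ℝ} (weight : κ → ℝ) {ζ : κ → Fin n → ℝ} {p : ι → ℝ}
    (hp : ∀ i j, (B *ᵥ p + ζ i) j ≠ 0 ∧ (B *ᵥ p + ζ i) j ≠ xu j) :
    HasSecondFDerivAt
      (fun q => lam / 2 * ∑ j, q j ^ 2 + ∑ i, weight i * quadCost Q s (boxProj xu (B *ᵥ q + ζ i)))
      (hessianForm (lam • (1 : Matrix ι ι ℝ) +
        Bᵀ * (∑ i, weight i • (diagonal (boxActivity xu (B *ᵥ p + ζ i)) * Q *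
          diagonal (boxActivity xu (B *ᵥ p + ζ i)))) * B)) p := by
  have hreg := (hasSecondFDerivAt_quadCost isSymm_one 0 p).const_smul lam
  have hcost := HasSecondFDerivAt.sum (u := Finset.univ) fun i _ =>
    (hasSecondFDerivAt_quadCost_boxProj B hQ s (ζ i) (hp i)).const_smul (weight i)
  convert hreg.add hcost using 1
  · funext q
    simp only [quadCost_one_zero, smul_eq_mul]
    ring
  · simp only [Matrix.mul_sum, Matrix.sum_mul, Matrix.mul_smul, Matrix.smul_mul, map_add, map_sum,
      map_smul]

/-- At a nondegenerate point `p*`, the Monte Carlo objective `f_N` is twice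
Fréchet differentiable, with Hessian
`∇²f_N(p*) = λ I + (1/N) Bᵀ (Σᵢ Diag(ω⁽ⁱ⁾) Q Diag(ω⁽ⁱ⁾)) B` :
the derivative of `p ↦ fderiv ℝ f_N p` exists at `p*` and is the bilinear map
`(v, w) ↦ ⟨H v, w⟩` associated with that matrix `H`.
(Here `‖p‖₂² = Σ_j p_j²`.) -/
theorem fN_hessian_at_nondegenerate {n N : ℕ}
    (B Q : Matrix (Fin n) (Fin n) ℝ) (hQ : Q.IsSymm)
    (s : Fin n → ℝ) (lam : ℝ)
    (xu : Fin n → ℝ) (hxu : ∀ j, 0 < xu j)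
    (ζ : Fin N → Fin n → ℝ)
    (pstar : Fin n → ℝ)
    (hnd : ∀ i j, (B.mulVec pstar + ζ i) j ≠ 0 ∧ (B.mulVec pstar + ζ i) j ≠ xu j)
    (ω : Fin N → Fin n → ℝ)
    (hω : ∀ i j, ω i j =
      if 0 < (B.mulVec pstar + ζ i) j ∧ (B.mulVec pstar + ζ i) j < xu j then 1 else 0)
    (fN : (Fin n → ℝ) → ℝ)
    (hfN : ∀ p, fN p =
      lam / 2 * ∑ j, p j ^ 2 +
        (1 / N : ℝ) * ∑ i : Fin N,
          ((1 / 2 : ℝ) * (Q.mulVec (boxProj xu (B.mulVec p + ζ i)) ⬝ᵥ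
              boxProj xu (B.mulVec p + ζ i)) -
            s ⬝ᵥ boxProj xu (B.mulVec p + ζ i)))
    (H : Matrix (Fin n) (Fin n) ℝ)
    (hH : H = lam • (1 : Matrix (Fin n) (Fin n) ℝ) +
      (1 / N : ℝ) •
        (Bᵀ * (∑ i : Fin N, Matrix.diagonal (ω i) * Q * Matrix.diagonal (ω i)) * B)) :
    ∃ f'' : (Fin n → ℝ) →L[ℝ] ((Fin n → ℝ) →L[ℝ] ℝ),
      HasFDerivAt (fderiv ℝ fN) f'' pstar ∧
        ∀ v w : Fin n → ℝ, f'' v w = H.mulVec v ⬝ᵥ w := by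
  have hω' : ω = fun i => boxActivity xu (B *ᵥ pstar + ζ i) := funext₂ hω
  refine ⟨hessianForm H, ?_, hessianForm_apply H⟩
  simpa only [hH, hω', funext hfN, quadCost, Finset.mul_sum, Finset.smul_sum, Matrix.mul_sum,
    Matrix.sum_mul, Matrix.mul_smul, Matrix.smul_mul] using
    (fN_hessian_at_nondegenerate_general B hQ s lam (fun _ => (1 / N : ℝ)) hnd).2
end
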